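/- Let g be a holomorphic function on the upper half-plane ℍ = {z : Im z > 0} satisfying g(z+1) = g(z) for all z ∈ ℍ, with finite Bloch norm sup_{z∈ℍ} 2 Im(z)|g'(z)| < ∞, and such that g(x+iy) → 0 uniformly in x as y → ∞. For p ∈ ℂ define β_g(p) := limsup_{y→0⁺} [ log( ∫₀¹ exp( Re(p·g(x+iy)) ) dx ) / log(1/y) ]. Suppose 0 ≤ m ≤ M are real numbers and there exist n₀ ≥ 2 and y₀ ∈ (0,1] such that for every real n ≥ n₀, every α ≥ 1, and every box B of type (n, α) contained in the strip {z : 0 < Im z ≤ y₀}, one has m ≤ ⨍_B (2 Im(z)|g'(z)|)² dA(z)/Im z ≤ M. Then m ≤ liminf_{p→0, p≠0} β_g(p)/(|p|²/4) ≤ limsup_{p→0, p≠0} β_g(p)/(|p|²/4) ≤ M. -/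

import Mathlib

open Complex MeasureTheory Filter Topology Set

/-- A box of type `(n, α)` in the upper half-plane: the rectangle
`[x₀, x₀ + α t] × [t/n, t]`. -/
noncomputable def blochBox (x₀ t n α : ℝ) : Set ℂ :=
  {z : ℂ | z.re ∈ Set.Icc x₀ (x₀ + α * t) ∧ z.im ∈ Set.Icc (t / n) t}

/-- The integral means spectrum of `exp (p • g)`:
`β_g(p) = limsup_{y→0⁺} log(∫₀¹ exp(Re(p g(x+iy))) dx) / log(1/y)`. -/
noncomputable def betaSpec (g : ℂ → ℂ) (p : ℂ) : ℝ :=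
  Filter.limsup
    (fun y : ℝ =>
      Real.log (∫ x in (0:ℝ)..1,
        Real.exp ((p * g ((x : ℂ) + (y : ℂ) * Complex.I)).re)) /
      Real.log (1 / y)) (𝓝[>] (0:ℝ))

/-!
If `h = p g` has Bloch seminorm at most `κ`, then `u = |exp h|` has Laplacian `|h'|² u`, so Green's
second identity for `u` and the harmonic function `Im` shows that the flux
`J(y) = ∫₀¹ (u - y ∂_y u) dx` satisfies `J(a) - J(b) = ∫₀¹ ∫_a^b y |h'|² u dy dx`. The Bloch bound
keeps `J` within a factor `1 ± κ / 2` of the integral mean `I` of `u`, and keeps `u` constant up to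
a factor `exp (3 κ n / 2)` on each box. Tiling the strip `t / n ≤ Im ≤ t` by boxes therefore
identifies `J(t / n) - J(t)` with `|p|² / 4 * log n * J(t)` times a number in `[m, M]`, up to
factors that tend to `1` as `κ → 0`. Iterating `t ↦ t / n` gives the growth exponent of `J`, hence
of `I`, and `κ = O(|p|)` makes the factors disappear as `p → 0`.
-/

open UpperHalfPlane (upperHalfPlaneSet isOpen_upperHalfPlaneSet)

lemma le_liminf_le_limsup_le_of_tendsto {ι α : Type*} [ConditionallyCompleteLinearOrder α]
    [TopologicalSpace α] [OrderTopology α] {F : Filter ι} [F.NeBot] {f lo hi : ι → α} {a b : α}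
    (hlo : Tendsto lo F (𝓝 a)) (hhi : Tendsto hi F (𝓝 b))
    (h : ∀ᶠ i in F, f i ∈ Icc (lo i) (hi i)) :
    a ≤ liminf f F ∧ liminf f F ≤ limsup f F ∧ limsup f F ≤ b := by
  have hlof : lo ≤ᶠ[F] f := h.mono fun _ hi => hi.1
  have hfhi : f ≤ᶠ[F] hi := h.mono fun _ hi => hi.2
  have hbdd : IsBoundedUnder (· ≤ ·) F f := hhi.isBoundedUnder_le.mono_le hfhi
  have hbdd' : IsBoundedUnder (· ≥ ·) F f := hlo.isBoundedUnder_ge.mono_ge hlof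
  refine ⟨?_, liminf_le_limsup hbdd hbdd', ?_⟩
  · rw [← hlo.liminf_eq]
    exact liminf_le_liminf hlof hlo.isBoundedUnder_ge hbdd.isCoboundedUnder_ge
  · rw [← hhi.limsup_eq]
    exact limsup_le_limsup hfhi hbdd'.isCoboundedUnder_le hhi.isBoundedUnder_le

lemma tendsto_log_one_div_nhdsGT_zero :
    Tendsto (fun y : ℝ => Real.log (1 / y)) (𝓝[>] 0) atTop := by
  simp only [one_div]
  exact Real.tendsto_log_atTop.comp tendsto_inv_nhdsGT_zero

lemma limsup_div_log_one_div_mem_Icc {φ : ℝ → ℝ} {a b c d : ℝ}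
    (h : ∀ᶠ y in 𝓝[>] (0 : ℝ),
      φ y ∈ Icc (c + a * Real.log (1 / y)) (d + b * Real.log (1 / y))) :
    limsup (fun y => φ y / Real.log (1 / y)) (𝓝[>] (0 : ℝ)) ∈ Icc a b := by
  have hlim (c a : ℝ) :
      Tendsto (fun y => c / Real.log (1 / y) + a) (𝓝[>] (0 : ℝ)) (𝓝 a) := by
    simpa using (tendsto_log_one_div_nhdsGT_zero.const_div_atTop c).add_const a
  obtain ⟨hle, hle', hle''⟩ := le_liminf_le_limsup_le_of_tendsto (hlim c a) (hlim d b)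
    (f := fun y => φ y / Real.log (1 / y)) (by
      filter_upwards [h, tendsto_log_one_div_nhdsGT_zero.eventually_gt_atTop 0]
        with y ⟨hlo, hhi⟩ hlog
      constructor
      · rwa [le_div_iff₀ hlog, add_mul, div_mul_cancel₀ _ hlog.ne']
      · rwa [div_le_iff₀ hlog, add_mul, div_mul_cancel₀ _ hlog.ne'])
  exact ⟨hle.trans hle', hle''⟩

lemma forall_mem_Ioc_of_div {P : ℝ → Prop} {n y₀ : ℝ} (hn : 1 < n)
    (base : ∀ y ∈ Ioc (y₀ / n) y₀, P y) (step : ∀ t ∈ Ioc 0 y₀, P t → P (t / n)) :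
    ∀ y ∈ Ioc 0 y₀, P y := by
  rintro y ⟨hy, hyy₀⟩
  have hn₀ : 0 < n := one_pos.trans hn
  obtain ⟨k, hk, hk'⟩ := exists_nat_pow_near ((one_le_div hy).2 hyy₀) hn
  rw [le_div_iff₀ hy] at hk
  rw [div_lt_iff₀ hy, pow_succ] at hk'
  have hdescend (j : ℕ) : j ≤ k → P (n ^ k * y / n ^ j) := by
    induction j with
    | zero =>
      intro _
      rw [pow_zero, div_one]
      refine base _ ⟨?_, hk⟩
      rw [div_lt_iff₀ hn₀]
      linarith
    | succ j ih =>
      intro hj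
      rw [pow_succ, ← div_div]
      refine step _ ⟨by positivity, ?_⟩ (ih (by lia))
      exact (div_le_self (by positivity) (one_le_pow₀ hn.le)).trans hk
  simpa [mul_div_cancel_left₀ _ (pow_pos hn₀ k).ne'] using hdescend k le_rfl

lemma log_one_div_div {t n : ℝ} (ht : 0 < t) (hn : 0 < n) :
    Real.log (1 / (t / n)) = Real.log (1 / t) + Real.log n := by
  rw [one_div_div, Real.log_div hn.ne' ht.ne', one_div, Real.log_inv]
  ring

lemma exists_add_log_one_div_le {φ : ℝ → ℝ} {n y₀ a : ℝ} (hn : 1 < n) (hy₀ : 0 < y₀)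
    (ha : 0 ≤ a) (hφ : AntitoneOn φ (Ioi 0))
    (step : ∀ t ∈ Ioc 0 y₀, φ t + a * Real.log n ≤ φ (t / n)) :
    ∃ c, ∀ y ∈ Ioc 0 y₀, c + a * Real.log (1 / y) ≤ φ y := by
  have hn₀ : 0 < n := one_pos.trans hn
  refine ⟨φ y₀ - a * Real.log (1 / (y₀ / n)), forall_mem_Ioc_of_div hn ?_ ?_⟩
  · rintro y ⟨hny, hyy₀⟩
    have hy : 0 < y := (div_pos hy₀ hn₀).trans hny
    have hlog : Real.log (1 / y) ≤ Real.log (1 / (y₀ / n)) := by gcongr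
    have := hφ hy hy₀ hyy₀
    nlinarith
  · intro t ht hPt
    rw [log_one_div_div ht.1 hn₀]
    linarith [step t ht]

lemma exists_le_add_log_one_div {φ : ℝ → ℝ} {n y₀ b : ℝ} (hn : 1 < n) (hy₀ : 0 < y₀)
    (hb : 0 ≤ b) (hφ : AntitoneOn φ (Ioi 0))
    (step : ∀ t ∈ Ioc 0 y₀, φ (t / n) ≤ φ t + b * Real.log n) :
    ∃ d, ∀ y ∈ Ioc 0 y₀, φ y ≤ d + b * Real.log (1 / y) := by
  have hn₀ : 0 < n := one_pos.trans hn
  refine ⟨φ (y₀ / n) - b * Real.log (1 / y₀), forall_mem_Ioc_of_div hn ?_ ?_⟩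
  · rintro y ⟨hny, hyy₀⟩
    have hy : 0 < y := (div_pos hy₀ hn₀).trans hny
    have hlog : Real.log (1 / y₀) ≤ Real.log (1 / y) := by gcongr
    have := hφ (div_pos hy₀ hn₀) hy hny.le
    nlinarith
  · intro t ht hPt
    rw [log_one_div_div ht.1 hn₀]
    linarith [step t ht]

/-! ### Comparison of integrals -/

lemma integral_zero_one_le_of_forall_mem_Icc {f g : ℝ → ℝ} {t : ℝ} (ht : 0 < t) (ht₁ : t ≤ 1)
    (hf : Continuous f) (hg : Continuous g)
    (h : ∀ x₀, ∀ w ∈ Icc t (2 * t), ∫ x in x₀..x₀ + w, f x ≤ ∫ x in x₀..x₀ + w, g x) :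
    ∫ x in (0 : ℝ)..1, f x ≤ ∫ x in (0 : ℝ)..1, g x := by
  set N := ⌊1 / t⌋₊
  have hN : (1 : ℝ) ≤ N := by
    exact_mod_cast Nat.floor_pos.2 ((one_le_div ht).2 ht₁)
  have hN₀ : (0 : ℝ) < N := one_pos.trans_le hN
  have hle : N * t ≤ 1 := (le_div_iff₀ ht).1 (Nat.floor_le (by positivity))
  have hlt : 1 < (N + 1) * t := (div_lt_iff₀ ht).1 (Nat.lt_floor_add_one _)
  have hw : 1 / (N : ℝ) ∈ Icc t (2 * t) := by
    rw [mem_Icc, le_div_iff₀ hN₀, div_le_iff₀ hN₀]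
    constructor <;> nlinarith
  have hsplit (u : ℝ → ℝ) (hu : Continuous u) :
      ∑ k ∈ Finset.range N, ∫ x in (k / N : ℝ)..k / N + 1 / N, u x = ∫ x in (0 : ℝ)..1, u x := by
    have := intervalIntegral.sum_integral_adjacent_intervals (μ := volume) (f := u)
      (a := fun k : ℕ => (k / N : ℝ)) (n := N) fun k _ => hu.intervalIntegrable _ _
    simpa [add_div, hN₀.ne'] using this
  rw [← hsplit f hf, ← hsplit g hg]
  exact Finset.sum_le_sum fun k _ => h _ _ hw

section Comparison

variable {U V W : ℝ → ℝ} {a b C D : ℝ}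

lemma integral_le_mul_integral_of_forall_le (hab : a < b) (hC : 0 ≤ C)
    (hU : IntervalIntegrable U volume a b) (hV : IntervalIntegrable V volume a b)
    (hW : IntervalIntegrable W volume a b) (hU₀ : ∀ x ∈ Icc a b, 0 ≤ U x)
    (h : ∀ x ∈ Icc a b, ∀ x' ∈ Icc a b, W x ≤ C * U x' * V x)
    (hD : ∫ x in a..b, V x ≤ D * (b - a)) :
    ∫ x in a..b, W x ≤ D * C * ∫ x in a..b, U x := by
  have hpoint : ∀ x' ∈ Icc a b, ∫ x in a..b, W x ≤ C * (D * (b - a)) * U x' := fun x' hx' =>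
    calc ∫ x in a..b, W x ≤ ∫ x in a..b, C * U x' * V x :=
          intervalIntegral.integral_mono_on hab.le hW (hV.const_mul _) fun x hx => h x hx x' hx'
      _ = C * U x' * ∫ x in a..b, V x := intervalIntegral.integral_const_mul _ _
      _ ≤ C * U x' * (D * (b - a)) := by have := hU₀ x' hx'; gcongr
      _ = C * (D * (b - a)) * U x' := by ring
  have := intervalIntegral.integral_mono_on hab.le intervalIntegrable_const
    (hU.const_mul (C * (D * (b - a)))) hpoint
  rw [intervalIntegral.integral_const, intervalIntegral.integral_const_mul, smul_eq_mul] at this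
  refine le_of_mul_le_mul_left (this.trans_eq ?_) (sub_pos.2 hab)
  ring

lemma mul_integral_le_integral_of_forall_le (hab : a < b)
    (hU : IntervalIntegrable U volume a b) (hV : IntervalIntegrable V volume a b)
    (hW : IntervalIntegrable W volume a b) (hU₀ : ∀ x ∈ Icc a b, 0 ≤ U x)
    (h : ∀ x ∈ Icc a b, ∀ x' ∈ Icc a b, U x' * V x ≤ C * W x)
    (hD : D * (b - a) ≤ ∫ x in a..b, V x) :
    D * ∫ x in a..b, U x ≤ C * ∫ x in a..b, W x := by
  have hpoint : ∀ x' ∈ Icc a b, D * (b - a) * U x' ≤ C * ∫ x in a..b, W x := fun x' hx' =>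
    calc D * (b - a) * U x' = U x' * (D * (b - a)) := mul_comm _ _
      _ ≤ U x' * ∫ x in a..b, V x := by have := hU₀ x' hx'; gcongr
      _ = ∫ x in a..b, U x' * V x := (intervalIntegral.integral_const_mul _ _).symm
      _ ≤ ∫ x in a..b, C * W x :=
          intervalIntegral.integral_mono_on hab.le (hV.const_mul _) (hW.const_mul _)
            fun x hx => h x hx x' hx'
      _ = C * ∫ x in a..b, W x := intervalIntegral.integral_const_mul _ _
  have := intervalIntegral.integral_mono_on hab.le (hU.const_mul (D * (b - a)))
    intervalIntegrable_const hpoint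
  rw [intervalIntegral.integral_const, intervalIntegral.integral_const_mul, smul_eq_mul] at this
  refine le_of_mul_le_mul_left (le_trans (le_of_eq ?_) this) (sub_pos.2 hab)
  ring

end Comparison

/-! ### Green's identity against the height function -/

open scoped Interval

lemma integral_sub_mul_eq_integral_mul_laplacian {u ux uy lap : ℝ × ℝ → ℝ}
    {u' ux' uy' : ℝ × ℝ → ℝ × ℝ →L[ℝ] ℝ} {a b c d : ℝ}
    (hu : ∀ q ∈ [[a, b]] ×ˢ [[c, d]], HasFDerivAt u (u' q) q)
    (hux : ∀ q ∈ [[a, b]] ×ˢ [[c, d]], HasFDerivAt ux (ux' q) q)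
    (huy : ∀ q ∈ [[a, b]] ×ˢ [[c, d]], HasFDerivAt uy (uy' q) q)
    (hu' : ∀ q ∈ [[a, b]] ×ˢ [[c, d]], u' q (0, 1) = uy q)
    (hlap : ∀ q ∈ [[a, b]] ×ˢ [[c, d]], ux' q (1, 0) + uy' q (0, 1) = lap q)
    (hcont : ContinuousOn lap ([[a, b]] ×ˢ [[c, d]]))
    (hper : ∀ y ∈ [[c, d]], ux (b, y) = ux (a, y)) :
    (∫ x in a..b, u (x, c) - c * uy (x, c)) - (∫ x in a..b, u (x, d) - d * uy (x, d)) =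
      ∫ x in a..b, ∫ y in c..d, y * lap (x, y) := by
  -- The field `(y * ux, y * uy - u)` has divergence `y * lap`.
  set P' := fun q : ℝ × ℝ => q.2 • ux' q + ux q • ContinuousLinearMap.snd ℝ ℝ ℝ
  set Q' := fun q : ℝ × ℝ => q.2 • uy' q + uy q • ContinuousLinearMap.snd ℝ ℝ ℝ - u' q
  have hP : ∀ q ∈ [[a, b]] ×ˢ [[c, d]], HasFDerivAt (fun q => q.2 * ux q) (P' q) q :=
    fun q hq => hasFDerivAt_snd.mul (hux q hq)
  have hQ : ∀ q ∈ [[a, b]] ×ˢ [[c, d]], HasFDerivAt (fun q => q.2 * uy q - u q) (Q' q) q :=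
    fun q hq => (hasFDerivAt_snd.mul (huy q hq)).sub (hu q hq)
  have hdiv : ∀ q ∈ [[a, b]] ×ˢ [[c, d]], P' q (1, 0) + Q' q (0, 1) = q.2 * lap q := by
    intro q hq
    simp only [P', Q', add_apply, sub_apply, smul_apply, ContinuousLinearMap.coe_snd', smul_eq_mul,
      ← hlap q hq, hu' q hq]
    ring
  have hint : IntegrableOn (fun q => P' q (1, 0) + Q' q (0, 1)) ([[a, b]] ×ˢ [[c, d]]) :=
    ((continuousOn_snd.mul hcont).integrableOn_compact
      (isCompact_uIcc.prod isCompact_uIcc)).congr_fun (fun q hq => (hdiv q hq).symm)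
      (measurableSet_uIcc.prod measurableSet_uIcc)
  have hsub : Ioo (min a b) (max a b) ×ˢ Ioo (min c d) (max c d) \ ∅ ⊆ [[a, b]] ×ˢ [[c, d]] :=
    sdiff_subset.trans (prod_mono Ioo_subset_Icc_self Ioo_subset_Icc_self)
  have key := integral2_divergence_prod_of_hasFDerivAt_off_countable
    (fun q => q.2 * ux q) (fun q => q.2 * uy q - u q) P' Q' a c b d ∅ countable_empty
    (fun q hq => (hP q hq).continuousAt.continuousWithinAt)
    (fun q hq => (hQ q hq).continuousAt.continuousWithinAt)
    (fun q hq => hP q (hsub hq)) (fun q hq => hQ q (hsub hq)) hint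
  have hsides : ∫ y in c..d, y * ux (b, y) = ∫ y in c..d, y * ux (a, y) :=
    intervalIntegral.integral_congr fun y hy => by simp only [hper y hy]
  calc (∫ x in a..b, u (x, c) - c * uy (x, c)) - (∫ x in a..b, u (x, d) - d * uy (x, d))
    _ = (∫ x in a..b, d * uy (x, d) - u (x, d)) - ∫ x in a..b, c * uy (x, c) - u (x, c) := by
        simp_rw [← neg_sub (u _), intervalIntegral.integral_neg]
        ring
    _ = ∫ x in a..b, ∫ y in c..d, P' (x, y) (1, 0) + Q' (x, y) (0, 1) := by
        rw [key, hsides, add_sub_cancel_right]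
    _ = ∫ x in a..b, ∫ y in c..d, y * lap (x, y) :=
        intervalIntegral.integral_congr fun x hx => intervalIntegral.integral_congr fun y hy =>
          hdiv (x, y) ⟨hx, hy⟩

/-! ### Holomorphic functions on the upper half-plane -/

lemma add_mul_I_im (x y : ℝ) : (x + y * I : ℂ).im = y := by simp

lemma add_mul_I_mem_upperHalfPlaneSet {x y : ℝ} (hy : 0 < y) :
    (x + y * I : ℂ) ∈ upperHalfPlaneSet := by
  simpa using hy

lemma hasFDerivAt_comp_add_mul_I {f : ℂ → ℂ} {f' : ℂ} {q : ℝ × ℝ}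
    (hf : HasDerivAt f f' (q.1 + q.2 * I)) :
    HasFDerivAt (fun q : ℝ × ℝ => f (q.1 + q.2 * I))
      (f' • (equivRealProdCLM.symm : ℝ × ℝ →L[ℝ] ℂ)) q := by
  have hline : HasFDerivAt (fun q : ℝ × ℝ => (q.1 + q.2 * I : ℂ))
      (equivRealProdCLM.symm : ℝ × ℝ →L[ℝ] ℂ) q := by
    refine equivRealProdCLM.symm.hasFDerivAt.congr_of_eventuallyEq (.of_forall fun q => ?_)
    rw [equivRealProdCLM_symm_apply]
  exact hf.complexToReal_fderiv.comp q hline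

section Continuous

variable {F : ℂ → ℝ} {a b c d : ℝ}

lemma continuous_comp_add_mul_I {y : ℝ} (hF : ContinuousOn F upperHalfPlaneSet) (hy : 0 < y) :
    Continuous fun x : ℝ => F (x + y * I) :=
  hF.comp_continuous (by fun_prop) fun _ => add_mul_I_mem_upperHalfPlaneSet hy

lemma intervalIntegrable_comp_add_mul_I (hF : ContinuousOn F upperHalfPlaneSet) (hc : 0 < c)
    (hcd : c ≤ d) (x : ℝ) : IntervalIntegrable (fun y : ℝ => F (x + y * I)) volume c d := by
  have hcont : ContinuousOn (fun y : ℝ => F (x + y * I)) (Icc c d) :=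
    hF.comp (by fun_prop) fun y hy => add_mul_I_mem_upperHalfPlaneSet (hc.trans_le hy.1)
  exact hcont.intervalIntegrable_of_Icc hcd

lemma continuous_integral_comp_add_mul_I (hF : ContinuousOn F upperHalfPlaneSet) (hc : 0 < c)
    (hcd : c ≤ d) : Continuous fun x : ℝ => ∫ y in c..d, F (x + y * I) := by
  -- Truncating the height at `c` makes the integrand continuous on the whole plane.
  have hG : Continuous fun q : ℝ × ℝ => F (q.1 + (max q.2 c : ℝ) * I) :=
    hF.comp_continuous (by fun_prop) fun q =>
      add_mul_I_mem_upperHalfPlaneSet (hc.trans_le (le_max_right _ _))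
  refine (intervalIntegral.continuous_parametric_intervalIntegral_of_continuous' (μ := volume)
    (f := fun x y : ℝ => F (x + (max y c : ℝ) * I)) hG c d).congr fun x => ?_
  refine intervalIntegral.integral_congr fun y hy => ?_
  rw [uIcc_of_le hcd] at hy
  simp only [max_eq_left hy.1]

lemma setIntegral_reProdIm_Icc (hF : ContinuousOn F upperHalfPlaneSet) (hab : a ≤ b) (hc : 0 < c)
    (hcd : c ≤ d) :
    ∫ z in Icc a b ×ℂ Icc c d, F z = ∫ x in a..b, ∫ y in c..d, F (x + y * I) := by
  have hcont : ContinuousOn (fun q : ℝ × ℝ => F (q.1 + q.2 * I)) (Icc a b ×ˢ Icc c d) :=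
    hF.comp (by fun_prop) fun q hq => add_mul_I_mem_upperHalfPlaneSet (hc.trans_le hq.2.1)
  calc ∫ z in Icc a b ×ℂ Icc c d, F z
    _ = ∫ z in measurableEquivRealProd ⁻¹' (Icc a b ×ˢ Icc c d), F (z.re + z.im * I) := by
        simp only [re_add_im]
        rfl
    _ = ∫ q in Icc a b ×ˢ Icc c d, F (q.1 + q.2 * I) :=
        volume_preserving_equiv_real_prod.setIntegral_preimage_emb
          measurableEquivRealProd.measurableEmbedding (fun q : ℝ × ℝ => F (q.1 + q.2 * I)) _
    _ = ∫ x in Icc a b, ∫ y in Icc c d, F (x + y * I) :=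
        setIntegral_prod _ (hcont.integrableOn_compact (isCompact_Icc.prod isCompact_Icc))
    _ = ∫ x in a..b, ∫ y in c..d, F (x + y * I) := by
        simp only [integral_Icc_eq_integral_Ioc, intervalIntegral.integral_of_le, hab, hcd]

end Continuous

/-- The mean of `|exp h|` over one period at height `y`. -/
noncomputable def expMean (h : ℂ → ℂ) (y : ℝ) : ℝ :=
  ∫ x in (0 : ℝ)..1, Real.exp (h (x + y * I)).re

/-- The boundary term at height `y` of Green's second identity for `|exp h|` against the harmonic
function `Im`, that is `I y - y * I' y` with `I = expMean h`; it is written out by the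
Cauchy–Riemann equation `∂_y (Re h) = -Im h'`. -/
noncomputable def expFlux (h : ℂ → ℂ) (y : ℝ) : ℝ :=
  ∫ x in (0 : ℝ)..1, (1 + y * (deriv h (x + y * I)).im) * Real.exp (h (x + y * I)).re

/-- The density whose box averages are controlled; it equals `4 * Im z * |h' z| ^ 2`. -/
noncomputable def energyDensity (h : ℂ → ℂ) (z : ℂ) : ℝ :=
  (2 * z.im * ‖deriv h z‖) ^ 2 / z.im

/-- The average of `(2 * Im z * |h' z|) ^ 2` over a box with respect to the measure `dA / Im`. -/
noncomputable def boxAverage (h : ℂ → ℂ) (x₀ t n α : ℝ) : ℝ :=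
  (∫ z in blochBox x₀ t n α, energyDensity h z) / (α * t * Real.log n)

section Holomorphic

variable {h : ℂ → ℂ}

lemma energyDensity_eq (h : ℂ → ℂ) (z : ℂ) : energyDensity h z = 4 * z.im * ‖deriv h z‖ ^ 2 := by
  rcases eq_or_ne z.im 0 with hz | hz
  · simp [energyDensity, hz]
  · rw [energyDensity]
    field_simp
    ring

lemma hasDerivAt_of_mem_upperHalfPlaneSet (hh : DifferentiableOn ℂ h upperHalfPlaneSet) {z : ℂ}
    (hz : z ∈ upperHalfPlaneSet) : HasDerivAt h (deriv h z) z :=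
  (hh.differentiableAt (isOpen_upperHalfPlaneSet.mem_nhds hz)).hasDerivAt

lemma deriv_add_one (hper : ∀ z ∈ upperHalfPlaneSet, h (z + 1) = h z) {z : ℂ}
    (hz : z ∈ upperHalfPlaneSet) : deriv h (z + 1) = deriv h z := by
  rw [← deriv_comp_add_const]
  exact EventuallyEq.deriv_eq (eventually_of_mem (isOpen_upperHalfPlaneSet.mem_nhds hz) hper)

lemma continuousOn_energyDensity (hh : DifferentiableOn ℂ h upperHalfPlaneSet) :
    ContinuousOn (energyDensity h) upperHalfPlaneSet := by
  have := (hh.deriv isOpen_upperHalfPlaneSet).continuousOn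
  exact (show ContinuousOn (fun z => 4 * z.im * ‖deriv h z‖ ^ 2) _ by fun_prop).congr
    fun z _ => energyDensity_eq h z

lemma continuousOn_exp_re (hh : DifferentiableOn ℂ h upperHalfPlaneSet) :
    ContinuousOn (fun z => Real.exp (h z).re) upperHalfPlaneSet :=
  (continuous_re.comp_continuousOn hh.continuousOn).rexp

lemma continuousOn_energyDensity_mul_exp_re (hh : DifferentiableOn ℂ h upperHalfPlaneSet) :
    ContinuousOn (fun z => energyDensity h z * Real.exp (h z).re) upperHalfPlaneSet :=
  (continuousOn_energyDensity hh).mul (continuousOn_exp_re hh)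

lemma hasFDerivAt_exp_re {h' : ℂ} {q : ℝ × ℝ} (hh : HasDerivAt h h' (q.1 + q.2 * I)) :
    HasFDerivAt (fun q : ℝ × ℝ => Real.exp (h (q.1 + q.2 * I)).re)
      (Real.exp (h (q.1 + q.2 * I)).re •
        reCLM ∘L (h' • (equivRealProdCLM.symm : ℝ × ℝ →L[ℝ] ℂ))) q :=
  (reCLM.hasFDerivAt.comp q (hasFDerivAt_comp_add_mul_I hh)).exp

/-- Green's identity for `|exp h|`, whose Laplacian is `|h'| ^ 2 * |exp h|`. -/
lemma expFlux_sub_expFlux (hh : DifferentiableOn ℂ h upperHalfPlaneSet)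
    (hper : ∀ z ∈ upperHalfPlaneSet, h (z + 1) = h z) {a b : ℝ} (ha : 0 < a) (hb : 0 < b) :
    expFlux h a - expFlux h b = 1 / 4 * ∫ x in (0 : ℝ)..1, ∫ y in a..b,
      energyDensity h (x + y * I) * Real.exp (h (x + y * I)).re := by
  have hmem : ∀ q ∈ [[(0 : ℝ), 1]] ×ˢ [[a, b]], (q.1 + q.2 * I : ℂ) ∈ upperHalfPlaneSet :=
    fun q hq => add_mul_I_mem_upperHalfPlaneSet ((lt_min ha hb).trans_le hq.2.1)
  have hh' := hh.deriv isOpen_upperHalfPlaneSet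
  have hu q (hq : q ∈ [[(0 : ℝ), 1]] ×ˢ [[a, b]]) :=
    hasFDerivAt_exp_re (hasDerivAt_of_mem_upperHalfPlaneSet hh (hmem q hq))
  have hd q (hq : q ∈ [[(0 : ℝ), 1]] ×ˢ [[a, b]]) :=
    hasFDerivAt_comp_add_mul_I (hasDerivAt_of_mem_upperHalfPlaneSet hh' (hmem q hq))
  have hcont : ContinuousOn (fun q : ℝ × ℝ => ‖deriv h (q.1 + q.2 * I)‖ ^ 2 *
      Real.exp (h (q.1 + q.2 * I)).re) ([[(0 : ℝ), 1]] ×ˢ [[a, b]]) :=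
    ((hh'.continuousOn.norm.pow 2).mul (continuousOn_exp_re hh)).comp (by fun_prop) hmem
  have hmatch (y : ℝ) (hy : y ∈ [[a, b]]) : h (1 + y * I) = h (y * I) ∧
      deriv h (1 + y * I) = deriv h (y * I) := by
    have hy' : (y * I : ℂ) ∈ upperHalfPlaneSet := by simpa using (lt_min ha hb).trans_le hy.1
    rw [add_comm]
    exact ⟨hper _ hy', deriv_add_one hper hy'⟩
  have green := integral_sub_mul_eq_integral_mul_laplacian hu
    (fun q hq => (reCLM.hasFDerivAt.comp q (hd q hq)).mul (hu q hq))
    (fun q hq => (imCLM.hasFDerivAt.comp q (hd q hq)).neg.mul (hu q hq))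
    (lap := fun q => ‖deriv h (q.1 + q.2 * I)‖ ^ 2 * Real.exp (h (q.1 + q.2 * I)).re)
    (fun q _ => by simp [mul_comm])
    (fun q _ => by
      simp only [Function.comp_apply, reCLM_apply, add_apply, smul_apply,
        ContinuousLinearMap.comp_apply, ContinuousLinearEquiv.coe_coe, smul_eq_mul, mul_re, mul_im,
        equivRealProdCLM_symm_apply_re, equivRealProdCLM_symm_apply_im, Pi.neg_apply, imCLM_apply,
        neg_apply, Complex.sq_norm, normSq_apply]
      ring) hcont (fun y hy => by simp [hmatch y hy])
  have hflux (y : ℝ) : expFlux h y = ∫ x in (0 : ℝ)..1, Real.exp (h (x + y * I)).re -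
      y * (-(deriv h (x + y * I)).im * Real.exp (h (x + y * I)).re) :=
    intervalIntegral.integral_congr fun x _ => by ring
  rw [hflux a, hflux b]
  refine green.trans ?_
  simp only [← intervalIntegral.integral_const_mul, energyDensity_eq]
  refine intervalIntegral.integral_congr fun x _ => intervalIntegral.integral_congr fun y _ => ?_
  rw [add_mul_I_im]
  ring

end Holomorphic

section Bloch

variable {h : ℂ → ℂ} {K : ℝ}

lemma energyDensity_nonneg {z : ℂ} (hz : 0 ≤ z.im) : 0 ≤ energyDensity h z := by
  unfold energyDensity
  positivity

lemma expMean_pos (hh : DifferentiableOn ℂ h upperHalfPlaneSet) {y : ℝ} (hy : 0 < y) :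
    0 < expMean h y :=
  intervalIntegral.intervalIntegral_pos_of_pos
    ((continuous_comp_add_mul_I (continuousOn_exp_re hh) hy).intervalIntegrable _ _)
    (fun _ => Real.exp_pos _) one_pos

lemma antitoneOn_expFlux (hh : DifferentiableOn ℂ h upperHalfPlaneSet)
    (hper : ∀ z ∈ upperHalfPlaneSet, h (z + 1) = h z) : AntitoneOn (expFlux h) (Ioi 0) := by
  intro a (ha : 0 < a) b hb hab
  rw [← sub_nonneg, expFlux_sub_expFlux hh hper ha hb]
  refine mul_nonneg (by norm_num) ?_
  refine intervalIntegral.integral_nonneg zero_le_one fun x _ =>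
    intervalIntegral.integral_nonneg hab fun y hy => ?_
  exact mul_nonneg (energyDensity_nonneg (add_mul_I_mem_upperHalfPlaneSet (ha.trans_le hy.1)).le)
    (Real.exp_pos _).le

lemma expFlux_mem_Icc (hh : DifferentiableOn ℂ h upperHalfPlaneSet)
    (hK : ∀ z ∈ upperHalfPlaneSet, 2 * z.im * ‖deriv h z‖ ≤ K) {y : ℝ} (hy : 0 < y) :
    expFlux h y ∈ Icc ((1 - K / 2) * expMean h y) ((1 + K / 2) * expMean h y) := by
  have hu := continuous_comp_add_mul_I (continuousOn_exp_re hh) hy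
  have him := continuous_comp_add_mul_I
    (continuous_im.comp_continuousOn (hh.deriv isOpen_upperHalfPlaneSet).continuousOn) hy
  have hflux : Continuous fun x : ℝ =>
      (1 + y * (deriv h (x + y * I)).im) * Real.exp (h (x + y * I)).re :=
    ((him.const_mul y).const_add 1).mul hu
  have hslope (x : ℝ) : |y * (deriv h (x + y * I)).im| ≤ K / 2 := by
    have hle := hK _ (add_mul_I_mem_upperHalfPlaneSet (x := x) hy)
    have : y * |(deriv h (x + y * I)).im| ≤ y * ‖deriv h (x + y * I)‖ := by
      gcongr
      exact abs_im_le_norm _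
    rw [abs_mul, abs_of_pos hy]
    rw [add_mul_I_im] at hle
    linarith
  simp only [expFlux, expMean, ← intervalIntegral.integral_const_mul]
  constructor
  · refine intervalIntegral.integral_mono zero_le_one ((hu.const_mul _).intervalIntegrable _ _)
      (hflux.intervalIntegrable _ _) fun x => mul_le_mul_of_nonneg_right ?_ (Real.exp_pos _).le
    linarith [neg_le_of_abs_le (hslope x)]
  · refine intervalIntegral.integral_mono zero_le_one (hflux.intervalIntegrable _ _)
      ((hu.const_mul _).intervalIntegrable _ _) fun x =>
        mul_le_mul_of_nonneg_right ?_ (Real.exp_pos _).le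
    linarith [le_of_abs_le (hslope x)]

lemma expFlux_pos (hh : DifferentiableOn ℂ h upperHalfPlaneSet)
    (hK : ∀ z ∈ upperHalfPlaneSet, 2 * z.im * ‖deriv h z‖ ≤ K) (hK₂ : K < 2) {y : ℝ}
    (hy : 0 < y) : 0 < expFlux h y :=
  (mul_pos (by linarith) (expMean_pos hh hy)).trans_le (expFlux_mem_Icc hh hK hy).1

lemma bloch_bound_nonneg (hK : ∀ z ∈ upperHalfPlaneSet, 2 * z.im * ‖deriv h z‖ ≤ K) : 0 ≤ K :=
  (by simp : 0 ≤ 2 * I.im * ‖deriv h I‖).trans (hK I (by simp))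

lemma norm_sub_le_of_bloch (hh : DifferentiableOn ℂ h upperHalfPlaneSet)
    (hK : ∀ z ∈ upperHalfPlaneSet, 2 * z.im * ‖deriv h z‖ ≤ K) {δ : ℝ} (hδ : 0 < δ) {z w : ℂ}
    (hz : δ ≤ z.im) (hw : δ ≤ w.im) : ‖h z - h w‖ ≤ K / (2 * δ) * ‖z - w‖ := by
  have hpos : ∀ ζ ∈ {ζ : ℂ | δ ≤ ζ.im}, ζ ∈ upperHalfPlaneSet := fun ζ hζ => hδ.trans_le hζ
  refine (convex_halfSpace_im_ge δ).norm_image_sub_le_of_norm_deriv_le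
    (fun ζ hζ => hh.differentiableAt (isOpen_upperHalfPlaneSet.mem_nhds (hpos ζ hζ)))
    (fun ζ (hζ : δ ≤ ζ.im) => ?_) hw hz
  rw [le_div_iff₀ (by positivity), mul_comm]
  refine le_trans ?_ (hK ζ (hpos ζ hζ))
  gcongr

lemma exp_re_le_exp_mul_of_bloch (hh : DifferentiableOn ℂ h upperHalfPlaneSet)
    (hK : ∀ z ∈ upperHalfPlaneSet, 2 * z.im * ‖deriv h z‖ ≤ K) {n t : ℝ} (hn : 0 < n) (ht : 0 < t)
    {z w : ℂ} (hz : z.im ∈ Icc (t / n) t) (hw : w.im ∈ Icc (t / n) t)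
    (hre : |z.re - w.re| ≤ 2 * t) :
    Real.exp (h z).re ≤ Real.exp (3 * K * n / 2) * Real.exp (h w).re := by
  have hδ : 0 < t / n := div_pos ht hn
  have hK₀ := bloch_bound_nonneg hK
  have hdist : ‖z - w‖ ≤ 3 * t := by
    have him : |z.im - w.im| ≤ t := abs_sub_le_of_nonneg_of_le (hδ.le.trans hz.1) hz.2
      (hδ.le.trans hw.1) hw.2
    have := norm_le_abs_re_add_abs_im (z - w)
    simp only [sub_re, sub_im] at this
    linarith
  rw [← Real.exp_add]
  gcongr
  have hsub : (h z).re - (h w).re ≤ 3 * K * n / 2 :=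
    calc (h z).re - (h w).re ≤ ‖h z - h w‖ := by simpa using re_le_norm (h z - h w)
      _ ≤ K / (2 * (t / n)) * ‖z - w‖ := norm_sub_le_of_bloch hh hK hδ hz.1 hw.1
      _ ≤ K / (2 * (t / n)) * (3 * t) := by gcongr
      _ = 3 * K * n / 2 := by field_simp
  linarith

end Bloch

section Boxes

variable {h : ℂ → ℂ} {K x₀ t n α : ℝ}

lemma blochBox_eq_reProdIm :
    blochBox x₀ t n α = Icc x₀ (x₀ + α * t) ×ℂ Icc (t / n) t := rfl

lemma boxAverage_nonneg (ht : 0 < t) (hn : 1 < n) (hα : 0 ≤ α) : 0 ≤ boxAverage h x₀ t n α := by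
  have hlog := Real.log_pos hn
  refine div_nonneg (setIntegral_nonneg ?_ fun z hz => ?_) (by positivity)
  · exact (isClosed_Icc.reProdIm isClosed_Icc).measurableSet
  · exact energyDensity_nonneg (le_trans (by positivity) hz.2.1)

lemma boxAverage_const_mul (p : ℂ) :
    boxAverage (fun z => p * h z) x₀ t n α = ‖p‖ ^ 2 * boxAverage h x₀ t n α := by
  have henergy (z : ℂ) : energyDensity (fun z => p * h z) z = ‖p‖ ^ 2 * energyDensity h z := by
    simp only [energyDensity, deriv_const_mul_field, norm_mul]
    ring
  simp only [boxAverage, henergy, integral_const_mul, mul_div_assoc]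

lemma integral_energyDensity_eq_boxAverage_mul {w : ℝ}
    (hh : DifferentiableOn ℂ h upperHalfPlaneSet) (ht : 0 < t) (hn : 1 < n) (hw : 0 < w) :
    ∫ x in x₀..x₀ + w, ∫ y in t / n..t, energyDensity h (x + y * I) =
      boxAverage h x₀ t n (w / t) * Real.log n * w := by
  have hlog := Real.log_pos hn
  rw [boxAverage, blochBox_eq_reProdIm, div_mul_cancel₀ _ ht.ne',
    setIntegral_reProdIm_Icc (continuousOn_energyDensity hh) (by linarith)
      (div_pos ht (one_pos.trans hn)) (div_le_self ht.le hn.le), mul_assoc, mul_comm (Real.log n),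
    div_mul_cancel₀ _ (by positivity)]

end Boxes

section Column

variable {h : ℂ → ℂ} {K t n : ℝ}

lemma integral_energyDensity_mul_exp_re_le (hh : DifferentiableOn ℂ h upperHalfPlaneSet)
    (hK : ∀ z ∈ upperHalfPlaneSet, 2 * z.im * ‖deriv h z‖ ≤ K) (hn : 1 < n) (ht : 0 < t)
    {x x' : ℝ} (hx : |x - x'| ≤ 2 * t) :
    ∫ y in t / n..t, energyDensity h (x + y * I) * Real.exp (h (x + y * I)).re ≤
      Real.exp (3 * K * n / 2) * Real.exp (h (x' + t * I)).re *
        ∫ y in t / n..t, energyDensity h (x + y * I) := by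
  have hn₀ : 0 < n := one_pos.trans hn
  have hδ : 0 < t / n := div_pos ht hn₀
  have hle : t / n ≤ t := div_le_self ht.le hn.le
  have hV := continuousOn_energyDensity hh
  have hW := continuousOn_energyDensity_mul_exp_re hh
  rw [← intervalIntegral.integral_const_mul]
  refine intervalIntegral.integral_mono_on hle
    (intervalIntegrable_comp_add_mul_I hW hδ hle x)
    ((intervalIntegrable_comp_add_mul_I hV hδ hle x).const_mul _) fun y hy => ?_
  rw [mul_comm (energyDensity _ _)]
  gcongr
  · exact energyDensity_nonneg (add_mul_I_mem_upperHalfPlaneSet (hδ.trans_le hy.1)).le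
  · exact exp_re_le_exp_mul_of_bloch hh hK hn₀ ht (by simpa using hy) (by simpa using hle)
      (by simpa using hx)

lemma exp_re_mul_integral_energyDensity_le (hh : DifferentiableOn ℂ h upperHalfPlaneSet)
    (hK : ∀ z ∈ upperHalfPlaneSet, 2 * z.im * ‖deriv h z‖ ≤ K) (hn : 1 < n) (ht : 0 < t)
    {x x' : ℝ} (hx : |x - x'| ≤ 2 * t) :
    Real.exp (h (x' + t * I)).re * ∫ y in t / n..t, energyDensity h (x + y * I) ≤
      Real.exp (3 * K * n / 2) *
        ∫ y in t / n..t, energyDensity h (x + y * I) * Real.exp (h (x + y * I)).re := by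
  have hn₀ : 0 < n := one_pos.trans hn
  have hδ : 0 < t / n := div_pos ht hn₀
  have hle : t / n ≤ t := div_le_self ht.le hn.le
  have hV := continuousOn_energyDensity hh
  have hW := continuousOn_energyDensity_mul_exp_re hh
  simp only [← intervalIntegral.integral_const_mul]
  refine intervalIntegral.integral_mono_on hle
    ((intervalIntegrable_comp_add_mul_I hV hδ hle x).const_mul _)
    ((intervalIntegrable_comp_add_mul_I hW hδ hle x).const_mul _) fun y hy => ?_
  rw [mul_comm (energyDensity _ _), ← mul_assoc]
  gcongr
  · exact energyDensity_nonneg (add_mul_I_mem_upperHalfPlaneSet (hδ.trans_le hy.1)).le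
  · exact exp_re_le_exp_mul_of_bloch hh hK hn₀ ht (by simpa using hle) (by simpa using hy)
      (by simpa [abs_sub_comm] using hx)

end Column

/-- The function `h` is holomorphic and `1`-periodic on the upper half-plane, with Bloch seminorm
`sup 2 * Im z * |h' z|` at most `K`. -/
structure IsPeriodicBloch (h : ℂ → ℂ) (K : ℝ) : Prop where
  differentiableOn : DifferentiableOn ℂ h upperHalfPlaneSet
  map_add_one : ∀ z ∈ upperHalfPlaneSet, h (z + 1) = h z
  bloch_le : ∀ z ∈ upperHalfPlaneSet, 2 * z.im * ‖deriv h z‖ ≤ K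

namespace IsPeriodicBloch

variable {h : ℂ → ℂ} {K t n m M : ℝ}

lemma const_mul (hh : IsPeriodicBloch h K) (p : ℂ) :
    IsPeriodicBloch (fun z => p * h z) (‖p‖ * K) where
  differentiableOn := hh.differentiableOn.const_mul p
  map_add_one z hz := by rw [hh.map_add_one z hz]
  bloch_le z hz := by
    rw [deriv_const_mul_field, norm_mul, mul_left_comm]
    gcongr
    exact hh.bloch_le z hz

lemma mul_expMean_le_expFlux_div_sub (hh : IsPeriodicBloch h K) (hn : 1 < n) (ht : t ∈ Ioc 0 1)
    (hbox : ∀ x₀, ∀ α ∈ Icc 1 2, m ≤ boxAverage h x₀ t n α) :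
    m * Real.log n * expMean h t ≤
      4 * Real.exp (3 * K * n / 2) * (expFlux h (t / n) - expFlux h t) := by
  obtain ⟨ht₀, ht₁⟩ := ht
  have hd := hh.differentiableOn
  have hδ : 0 < t / n := div_pos ht₀ (one_pos.trans hn)
  have hle : t / n ≤ t := div_le_self ht₀.le hn.le
  have hU := continuous_comp_add_mul_I (continuousOn_exp_re hd) ht₀
  have hV := continuous_integral_comp_add_mul_I (continuousOn_energyDensity hd) hδ hle
  have hW := continuous_integral_comp_add_mul_I (continuousOn_energyDensity_mul_exp_re hd) hδ hle
  have hint := integral_zero_one_le_of_forall_mem_Icc ht₀ ht₁ (hU.const_mul (m * Real.log n))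
    (hW.const_mul (Real.exp (3 * K * n / 2))) fun x₀ w hw => by
      simp only [intervalIntegral.integral_const_mul]
      have hw₀ : 0 < w := ht₀.trans_le hw.1
      have hlog := Real.log_pos hn
      refine mul_integral_le_integral_of_forall_le (lt_add_of_pos_right _ hw₀)
        (hU.intervalIntegrable _ _) (hV.intervalIntegrable _ _) (hW.intervalIntegrable _ _)
        (fun x _ => (Real.exp_pos _).le)
        (fun x hx x' hx' => exp_re_mul_integral_energyDensity_le hd hh.bloch_le hn ht₀
          ((Real.dist_le_of_mem_Icc hx hx').trans (by linarith [hw.2]))) ?_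
      rw [integral_energyDensity_eq_boxAverage_mul hd ht₀ hn hw₀, add_sub_cancel_left]
      gcongr
      exact hbox x₀ _ ⟨(one_le_div ht₀).2 hw.1, (div_le_iff₀ ht₀).2 hw.2⟩
  simp only [intervalIntegral.integral_const_mul] at hint
  rw [expFlux_sub_expFlux hd hh.map_add_one hδ ht₀]
  exact hint.trans_eq (by ring)

lemma expFlux_div_sub_le_mul_expMean (hh : IsPeriodicBloch h K) (hn : 1 < n) (ht : t ∈ Ioc 0 1)
    (hbox : ∀ x₀, ∀ α ∈ Icc 1 2, boxAverage h x₀ t n α ≤ M) :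
    4 * (expFlux h (t / n) - expFlux h t) ≤
      M * Real.log n * Real.exp (3 * K * n / 2) * expMean h t := by
  obtain ⟨ht₀, ht₁⟩ := ht
  have hd := hh.differentiableOn
  have hδ : 0 < t / n := div_pos ht₀ (one_pos.trans hn)
  have hle : t / n ≤ t := div_le_self ht₀.le hn.le
  have hU := continuous_comp_add_mul_I (continuousOn_exp_re hd) ht₀
  have hV := continuous_integral_comp_add_mul_I (continuousOn_energyDensity hd) hδ hle
  have hW := continuous_integral_comp_add_mul_I (continuousOn_energyDensity_mul_exp_re hd) hδ hle
  have hint := integral_zero_one_le_of_forall_mem_Icc ht₀ ht₁ hW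
    (hU.const_mul (M * Real.log n * Real.exp (3 * K * n / 2))) fun x₀ w hw => by
      simp only [intervalIntegral.integral_const_mul]
      have hw₀ : 0 < w := ht₀.trans_le hw.1
      have hlog := Real.log_pos hn
      refine integral_le_mul_integral_of_forall_le (lt_add_of_pos_right _ hw₀) (Real.exp_pos _).le
        (hU.intervalIntegrable _ _) (hV.intervalIntegrable _ _) (hW.intervalIntegrable _ _)
        (fun x _ => (Real.exp_pos _).le)
        (fun x hx x' hx' => integral_energyDensity_mul_exp_re_le hd hh.bloch_le hn ht₀
          ((Real.dist_le_of_mem_Icc hx hx').trans (by linarith [hw.2]))) ?_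
      rw [integral_energyDensity_eq_boxAverage_mul hd ht₀ hn hw₀, add_sub_cancel_left]
      gcongr
      exact hbox x₀ _ ⟨(one_le_div ht₀).2 hw.1, (div_le_iff₀ ht₀).2 hw.2⟩
  simp only [intervalIntegral.integral_const_mul] at hint
  rw [expFlux_sub_expFlux hd hh.map_add_one hδ ht₀]
  exact (le_of_eq (by ring)).trans hint

lemma log_expFlux_div_le (hh : IsPeriodicBloch h K) (hK₂ : K < 2) (hn : 1 < n)
    (ht : t ∈ Ioc 0 1) (hM : 0 ≤ M) (hbox : ∀ x₀, ∀ α ∈ Icc 1 2, boxAverage h x₀ t n α ≤ M) :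
    Real.log (expFlux h (t / n)) ≤ Real.log (expFlux h t) +
      M / 4 * (Real.exp (3 * K * n / 2) / (1 - K / 2)) * Real.log n := by
  set A := M / 4 * (Real.exp (3 * K * n / 2) / (1 - K / 2)) * Real.log n with hA
  have hJ := expFlux_pos hh.differentiableOn hh.bloch_le hK₂ ht.1
  have hJ' := expFlux_pos hh.differentiableOn hh.bloch_le hK₂ (div_pos ht.1 (one_pos.trans hn))
  have hlog := Real.log_pos hn
  have hK₂' : 0 < 1 - K / 2 := by linarith
  have hA₀ : 0 ≤ A := by positivity
  have hratio : expFlux h (t / n) / expFlux h t ≤ 1 + A := by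
    rw [div_le_iff₀ hJ]
    have hstep := hh.expFlux_div_sub_le_mul_expMean hn ht hbox
    have hmean := mul_le_mul_of_nonneg_left
      (expFlux_mem_Icc hh.differentiableOn hh.bloch_le ht.1).1 hA₀
    have hA' : A * (1 - K / 2) * 4 = M * Real.log n * Real.exp (3 * K * n / 2) := by
      rw [hA]
      linear_combination M * Real.log n * div_mul_cancel₀ (Real.exp (3 * K * n / 2)) hK₂'.ne'
    rw [← hA'] at hstep
    linarith
  have := (Real.log_le_log (div_pos hJ' hJ) hratio).trans
    (Real.log_le_sub_one_of_pos (by positivity))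
  rw [Real.log_div hJ'.ne' hJ.ne'] at this
  linarith

lemma le_log_expFlux_div (hh : IsPeriodicBloch h K) (hK₂ : K < 2) (hn : 1 < n)
    (ht : t ∈ Ioc 0 1) (hm : 0 ≤ m) (hbox : ∀ x₀, ∀ α ∈ Icc 1 2, m ≤ boxAverage h x₀ t n α) :
    Real.log (expFlux h t) +
        m / 4 / ((1 + K / 2) * Real.exp (3 * K * n / 2) + m / 4 * Real.log n) * Real.log n ≤
      Real.log (expFlux h (t / n)) := by
  set E := Real.exp (3 * K * n / 2)
  set B := m / 4 * Real.log n / ((1 + K / 2) * E) with hB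
  have hJ := expFlux_pos hh.differentiableOn hh.bloch_le hK₂ ht.1
  have hJ' := expFlux_pos hh.differentiableOn hh.bloch_le hK₂ (div_pos ht.1 (one_pos.trans hn))
  have hlog := Real.log_pos hn
  have hK₀ := bloch_bound_nonneg hh.bloch_le
  have hE : 0 < E := Real.exp_pos _
  have hB₀ : 0 ≤ B := by positivity
  have hratio : 1 + B ≤ expFlux h (t / n) / expFlux h t := by
    rw [le_div_iff₀ hJ]
    have hstep := hh.mul_expMean_le_expFlux_div_sub hn ht hbox
    have hmean := mul_le_mul_of_nonneg_left
      (expFlux_mem_Icc hh.differentiableOn hh.bloch_le ht.1).2 hB₀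
    have hB' : m * Real.log n = 4 * E * (B * (1 + K / 2)) := by
      rw [hB]
      field_simp
    rw [hB', mul_assoc] at hstep
    have := le_of_mul_le_mul_left hstep (by positivity)
    linarith
  have hrate : m / 4 / ((1 + K / 2) * E + m / 4 * Real.log n) * Real.log n = 1 - (1 + B)⁻¹ := by
    rw [hB]
    field_simp
    ring
  have := (Real.one_sub_inv_le_log_of_pos (by positivity)).trans
    (Real.log_le_log (by positivity) hratio)
  rw [Real.log_div hJ'.ne' hJ.ne'] at this
  linarith

lemma antitoneOn_log_expFlux (hh : IsPeriodicBloch h K) (hK : K < 2) :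
    AntitoneOn (fun y => Real.log (expFlux h y)) (Ioi 0) := fun _ ha _ hb hab =>
  Real.log_le_log (expFlux_pos hh.differentiableOn hh.bloch_le hK hb)
    (antitoneOn_expFlux hh.differentiableOn hh.map_add_one ha hb hab)

lemma log_expMean_mem_Icc (hh : IsPeriodicBloch h K) (hK : K < 2) {y : ℝ} (hy : 0 < y) :
    Real.log (expMean h y) ∈ Icc (Real.log (expFlux h y) - Real.log (1 + K / 2))
      (Real.log (expFlux h y) - Real.log (1 - K / 2)) := by
  have hK₀ := bloch_bound_nonneg hh.bloch_le
  have hI := expMean_pos hh.differentiableOn hy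
  have hJ := expFlux_pos hh.differentiableOn hh.bloch_le hK hy
  obtain ⟨hlo, hhi⟩ := expFlux_mem_Icc hh.differentiableOn hh.bloch_le hy
  have hlo' := Real.log_le_log (mul_pos (by linarith) hI) hlo
  have hhi' := Real.log_le_log hJ hhi
  rw [Real.log_mul (by linarith) hI.ne'] at hlo' hhi'
  constructor <;> linarith

lemma limsup_log_expMean_div_mem_Icc (hh : IsPeriodicBloch h K) (hK : K < 2) {y₀ : ℝ} (hn : 1 < n)
    (hy₀ : y₀ ∈ Ioc 0 1) (hm : 0 ≤ m)
    (hbox : ∀ t ∈ Ioc 0 y₀, ∀ x₀, ∀ α ∈ Icc 1 2, boxAverage h x₀ t n α ∈ Icc m M) :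
    limsup (fun y => Real.log (expMean h y) / Real.log (1 / y)) (𝓝[>] 0) ∈
      Icc (m / 4 / ((1 + K / 2) * Real.exp (3 * K * n / 2) + m / 4 * Real.log n))
        (M / 4 * (Real.exp (3 * K * n / 2) / (1 - K / 2))) := by
  have hK₀ := bloch_bound_nonneg hh.bloch_le
  have hK₂ : 0 < 1 - K / 2 := by linarith
  have hlog := Real.log_pos hn
  have hM : 0 ≤ M := by
    have hb := hbox y₀ ⟨hy₀.1, le_rfl⟩ 0 1 (by norm_num)
    exact hm.trans (hb.1.trans hb.2)
  have ht {t : ℝ} (ht : t ∈ Ioc 0 y₀) : t ∈ Ioc 0 1 := ⟨ht.1, ht.2.trans hy₀.2⟩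
  obtain ⟨c, hc⟩ := exists_add_log_one_div_le hn hy₀.1 (by positivity)
    (hh.antitoneOn_log_expFlux hK) fun t h => hh.le_log_expFlux_div hK hn (ht h) hm
      fun x₀ α hα => (hbox t h x₀ α hα).1
  obtain ⟨d, hd⟩ := exists_le_add_log_one_div hn hy₀.1 (by positivity)
    (hh.antitoneOn_log_expFlux hK) fun t h => hh.log_expFlux_div_le hK hn (ht h) hM
      fun x₀ α hα => (hbox t h x₀ α hα).2
  refine limsup_div_log_one_div_mem_Icc (c := c - Real.log (1 + K / 2))
    (d := d - Real.log (1 - K / 2)) ?_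
  filter_upwards [Ioc_mem_nhdsGT hy₀.1] with y hy
  obtain ⟨hlo, hhi⟩ := hh.log_expMean_mem_Icc hK hy.1
  exact ⟨by linarith [hc y hy], by linarith [hd y hy]⟩

lemma betaSpec_div_mem_Icc {g : ℂ → ℂ} (hg : IsPeriodicBloch g K) {y₀ : ℝ} (hn : 1 < n)
    (hy₀ : y₀ ∈ Ioc 0 1) (hm : 0 ≤ m)
    (hbox : ∀ t ∈ Ioc 0 y₀, ∀ x₀, ∀ α ∈ Icc 1 2, boxAverage g x₀ t n α ∈ Icc m M)
    {p : ℂ} (hp : p ≠ 0) (hpK : ‖p‖ * K < 2) :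
    betaSpec g p / (‖p‖ ^ 2 / 4) ∈
      Icc (m / ((1 + ‖p‖ * K / 2) * Real.exp (3 * (‖p‖ * K) * n / 2) +
          ‖p‖ ^ 2 * m / 4 * Real.log n))
        (M * Real.exp (3 * (‖p‖ * K) * n / 2) / (1 - ‖p‖ * K / 2)) := by
  have : 0 < ‖p‖ := norm_pos_iff.2 hp
  obtain ⟨hlo, hhi⟩ := (hg.const_mul p).limsup_log_expMean_div_mem_Icc hpK (m := ‖p‖ ^ 2 * m)
    (M := ‖p‖ ^ 2 * M) hn hy₀ (by positivity) fun t ht x₀ α hα => by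
      rw [boxAverage_const_mul]
      obtain ⟨h₁, h₂⟩ := hbox t ht x₀ α hα
      constructor <;> gcongr
  constructor
  · rw [le_div_iff₀ (by positivity)]
    refine le_trans (le_of_eq ?_) hlo
    ring
  · rw [div_le_iff₀ (by positivity)]
    refine hhi.trans_eq ?_
    ring

end IsPeriodicBloch

theorem stmt0_general {g : ℂ → ℂ} {K m M n y₀ : ℝ} (hg : IsPeriodicBloch g K) (hn : 1 < n)
    (hy₀ : 0 < y₀)
    (hbox : ∀ t ∈ Ioc 0 y₀, ∀ x₀, ∀ α ∈ Icc 1 2, boxAverage g x₀ t n α ∈ Icc m M) :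
    m ≤ liminf (fun p : ℂ => betaSpec g p / (‖p‖ ^ 2 / 4)) (𝓝[≠] 0) ∧
    liminf (fun p : ℂ => betaSpec g p / (‖p‖ ^ 2 / 4)) (𝓝[≠] 0) ≤
      limsup (fun p : ℂ => betaSpec g p / (‖p‖ ^ 2 / 4)) (𝓝[≠] 0) ∧
    limsup (fun p : ℂ => betaSpec g p / (‖p‖ ^ 2 / 4)) (𝓝[≠] 0) ≤ M := by
  set lo : ℂ → ℝ := fun p => max m 0 / ((1 + ‖p‖ * K / 2) *
    Real.exp (3 * (‖p‖ * K) * n / 2) + ‖p‖ ^ 2 * max m 0 / 4 * Real.log n)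
  set hi : ℂ → ℝ := fun p => M * Real.exp (3 * (‖p‖ * K) * n / 2) / (1 - ‖p‖ * K / 2)
  have hlo : Tendsto lo (𝓝[≠] 0) (𝓝 (max m 0)) := by
    have : ContinuousAt lo 0 := ContinuousAt.div (by fun_prop) (by fun_prop) (by simp)
    simpa [lo] using this.tendsto.mono_left nhdsWithin_le_nhds
  have hhi : Tendsto hi (𝓝[≠] 0) (𝓝 M) := by
    have : ContinuousAt hi 0 := ContinuousAt.div (by fun_prop) (by fun_prop) (by simp)
    simpa [hi] using this.tendsto.mono_left nhdsWithin_le_nhds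
  have hsmall : ∀ᶠ p : ℂ in 𝓝[≠] 0, ‖p‖ * K < 2 :=
    ((show Continuous fun p : ℂ => ‖p‖ * K by fun_prop).continuousWithinAt).eventually_lt_const
      (by simp)
  have hmem : ∀ᶠ p in 𝓝[≠] (0 : ℂ), betaSpec g p / (‖p‖ ^ 2 / 4) ∈ Icc (lo p) (hi p) := by
    filter_upwards [hsmall, self_mem_nhdsWithin] with p hpK hp
    refine hg.betaSpec_div_mem_Icc hn ⟨lt_min hy₀ one_pos, min_le_right _ _⟩ (le_max_right _ _)
      (fun t ht x₀ α hα => ?_) hp hpK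
    obtain ⟨hm, hM⟩ := hbox t ⟨ht.1, ht.2.trans (min_le_left _ _)⟩ x₀ α hα
    exact ⟨max_le hm (boxAverage_nonneg ht.1 hn (zero_le_one.trans hα.1)), hM⟩
  obtain ⟨h₁, h₂, h₃⟩ := le_liminf_le_limsup_le_of_tendsto hlo hhi hmem
  exact ⟨(le_max_left _ _).trans h₁, h₂, h₃⟩

theorem stmt0 (g : ℂ → ℂ)
    (hg : DifferentiableOn ℂ g {z : ℂ | 0 < z.im})
    (hper : ∀ z : ℂ, 0 < z.im → g (z + 1) = g z)
    (hbloch : ∃ K : ℝ, ∀ z : ℂ, 0 < z.im → 2 * z.im * ‖deriv g z‖ ≤ K)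
    (hdecay : ∀ ε : ℝ, 0 < ε → ∃ Y : ℝ, ∀ x y : ℝ, Y ≤ y →
      ‖g ((x : ℂ) + (y : ℂ) * Complex.I)‖ < ε)
    (m M : ℝ) (hm : 0 ≤ m) (hmM : m ≤ M)
    (n₀ : ℝ) (hn₀ : 2 ≤ n₀) (y₀ : ℝ) (hy₀ : 0 < y₀) (hy₀1 : y₀ ≤ 1)
    (hbox : ∀ n : ℝ, n₀ ≤ n → ∀ α : ℝ, 1 ≤ α → ∀ x₀ t : ℝ, 0 < t → t ≤ y₀ →
      m ≤ (∫ z in blochBox x₀ t n α, (2 * z.im * ‖deriv g z‖)^2 / z.im) /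
            (α * t * Real.log n) ∧
      (∫ z in blochBox x₀ t n α, (2 * z.im * ‖deriv g z‖)^2 / z.im) /
            (α * t * Real.log n) ≤ M) :
    m ≤ Filter.liminf (fun p : ℂ => betaSpec g p / (‖p‖^2 / 4)) (𝓝[≠] (0:ℂ)) ∧
    Filter.liminf (fun p : ℂ => betaSpec g p / (‖p‖^2 / 4)) (𝓝[≠] (0:ℂ)) ≤
      Filter.limsup (fun p : ℂ => betaSpec g p / (‖p‖^2 / 4)) (𝓝[≠] (0:ℂ)) ∧
    Filter.limsup (fun p : ℂ => betaSpec g p / (‖p‖^2 / 4)) (𝓝[≠] (0:ℂ)) ≤ M := by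
  obtain ⟨K, hK⟩ := hbloch
  exact stmt0_general ⟨hg, hper, hK⟩ (by linarith : 1 < n₀) hy₀
    fun t ht x₀ α hα => hbox n₀ le_rfl α hα.1 x₀ t ht.1 ht.2
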